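/- Let β > 1 be a real number and suppose that Σ_{j≥1} λ_j β^{−j} = 1 and that lim_{n→∞} υ_{n+2}/υ_n = β². Then for every k ≥ 1, lim_{n→∞} #{ω ∈ Υ_n : s(ω) = k} / υ_n = λ_k β^{−k}; that is, under the uniform measure μ_n on Υ_n, the probability that the least renewal time equals k converges to λ_k β^{−k} as n → ∞. -/

import Mathlib

/-- An `n`-step self-avoiding walk in `ℤ^d`, given by its `n+1` vertices:
consecutive vertices are nearest neighbors, and all vertices are distinct. -/
def IsSAW (d n : ℕ) (ω : Fin (n + 1) → Fin d → ℤ) : Prop :=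
  (∀ i : Fin n, (∑ k : Fin d, |ω i.succ k - ω i.castSucc k|) = 1) ∧ Function.Injective ω

/-- The projection `π₁` onto the first coordinate. -/
def pi1 {d : ℕ} (x : Fin d → ℤ) : ℤ := if h : 0 < d then x ⟨0, h⟩ else 0

/-- `Υ_n`: the set of `n`-step self-avoiding walks in `ℤ^d` starting at `0` with
`π₁ ω_j > 0` for `1 ≤ j ≤ n`. -/
def Upsilon (d n : ℕ) : Set (Fin (n + 1) → Fin d → ℤ) :=
  {ω | IsSAW d n ω ∧ ω 0 = 0 ∧ ∀ j : Fin (n + 1), 1 ≤ j.val → 0 < pi1 (ω j)}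

/-- `υ_n`, the number of walks in `Υ_n`. -/
noncomputable def upsilonCount (d n : ℕ) : ℕ := Set.ncard (Upsilon d n)

/-- `j` is a renewal time of the `n`-step walk `ω`: `1 ≤ j ≤ n-1` and
`π₁ ω_k ≤ π₁ ω_j < π₁ ω_m` whenever `0 ≤ k ≤ j < m ≤ n`. -/
def HasRenewalAt {d n : ℕ} (ω : Fin (n + 1) → Fin d → ℤ) (j : ℕ) : Prop :=
  1 ≤ j ∧ ∃ hj : j < n, ∀ k m : Fin (n + 1), k.val ≤ j → j < m.val →
    pi1 (ω k) ≤ pi1 (ω ⟨j, Nat.lt_succ_of_lt hj⟩) ∧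
      pi1 (ω ⟨j, Nat.lt_succ_of_lt hj⟩) < pi1 (ω m)

/-- `s(ω) = k`: `k` is the least renewal time of `ω`. -/
def LeastRenewal {d n : ℕ} (ω : Fin (n + 1) → Fin d → ℤ) (k : ℕ) : Prop :=
  HasRenewalAt ω k ∧ ∀ j < k, ¬ HasRenewalAt ω j

/-- A bridge: a walk in `Υ_n` with `π₁ ω_j ≤ π₁ ω_n` for all `0 ≤ j ≤ n`. -/
def IsBridge (d n : ℕ) (ω : Fin (n + 1) → Fin d → ℤ) : Prop :=
  ω ∈ Upsilon d n ∧ ∀ j : Fin (n + 1), pi1 (ω j) ≤ pi1 (ω (Fin.last n))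

/-- An irreducible bridge: a bridge with no renewal time. -/
def IsIrrBridge (d n : ℕ) (ω : Fin (n + 1) → Fin d → ℤ) : Prop :=
  IsBridge d n ω ∧ ∀ j : ℕ, ¬ HasRenewalAt ω j

/-- `λ_k`, the number of `k`-step irreducible bridges. -/
noncomputable def lambdaCount (d k : ℕ) : ℕ :=
  Set.ncard {ω : Fin (k + 1) → Fin d → ℤ | IsIrrBridge d k ω}

/-!
Cutting a walk at its least renewal time `k` yields an irreducible bridge and a walk in the same
half-space, so `#{ω ∈ Υ_n : s(ω) = k} = λ_k υ_{n-k}` for `k < n`, and it remains to show that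
`υ_{n-k} / υ_n → β⁻ᵏ`. Even `k` are covered by the hypothesis on `υ_{n+2} / υ_n`, so the point is
`ρ_n = υ_{n-1} / υ_n → β⁻¹`. Summing over the least renewal time gives `∑_j λ_j υ_{n-j} ≤ υ_n`.
If `ρ_n ≥ c > β⁻¹` held for arbitrarily large `n`, then for such `n` the terms with odd `j` would
push the left side above `υ_n`, since `∑_j λ_j β⁻ʲ = 1` and `λ_1 > 0`; hence `limsup ρ_n ≤ β⁻¹`.
As `ρ_n ρ_{n-1} → β⁻²`, this upper bound for `ρ_{n-1}` is also a lower bound for `ρ_n`.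
-/

section RatioLimit

open Filter Topology

theorem tendsto_sub_mul_div {G₀ : Type*} [GroupWithZero G₀] [TopologicalSpace G₀]
    [ContinuousMul G₀] {a : ℕ → G₀} {r : G₀} (ha : ∀ᶠ n in atTop, a n ≠ 0) {c : ℕ}
    (hc : Tendsto (fun n => a (n - c) / a n) atTop (𝓝 r)) (i : ℕ) :
    Tendsto (fun n => a (n - c * i) / a n) atTop (𝓝 (r ^ i)) := by
  induction i with
  | zero =>
    refine tendsto_const_nhds.congr' ?_
    filter_upwards [ha] with n hn
    rw [pow_zero, mul_zero, Nat.sub_zero, div_self hn]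
  | succ i ih =>
    rw [pow_succ]
    refine ((ih.comp (tendsto_sub_atTop_nat c)).mul hc).congr' ?_
    filter_upwards [(tendsto_sub_atTop_nat c).eventually ha] with n hn
    rw [Function.comp_apply, div_mul_div_cancel₀ hn, Nat.sub_sub, mul_add_one, add_comm]

theorem tendsto_of_tendsto_mul_of_eventually_lt {ι K : Type*} [Field K] [LinearOrder K]
    [IsStrictOrderedRing K] [TopologicalSpace K] [OrderTopology K] {l : Filter ι} {u v : ι → K}
    {r s : K} (hs : 0 < s) (hpos : ∀ᶠ i in l, 0 < u i)
    (huv : Tendsto (fun i => u i * v i) l (𝓝 (r * s)))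
    (hu : ∀ c, r < c → ∀ᶠ i in l, u i < c) (hv : ∀ c, s < c → ∀ᶠ i in l, v i < c) :
    Tendsto u l (𝓝 r) := by
  refine tendsto_order.2 ⟨fun c hc => ?_, hu⟩
  rcases le_or_gt c 0 with hc0 | hc0
  · exact hpos.mono fun i hi => hc0.trans_lt hi
  · obtain ⟨b, hsb, hb⟩ : ∃ b, s < b ∧ b < r * s / c :=
      exists_between ((lt_div_iff₀ hc0).2 (by rw [mul_comm]; gcongr))
    have hcb : c * b < r * s := by rwa [lt_div_iff₀ hc0, mul_comm] at hb
    filter_upwards [hpos, hv b hsb, huv.eventually_const_lt hcb] with i hui hvi huvi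
    exact lt_of_mul_lt_mul_right (huvi.trans (by gcongr)) (hs.trans hsb).le

theorem exists_lt_sum_of_le {ι M : Type*} [AddCommGroup M] [LinearOrder M] [IsOrderedAddMonoid M]
    [TopologicalSpace M] [OrderTopology M] {f g : ι → M} {x : M} (hf : HasSum f x)
    (hfg : ∀ i, f i ≤ g i) {i₀ : ι} (hi₀ : f i₀ < g i₀) : ∃ F : Finset ι, x < ∑ i ∈ F, g i := by
  obtain ⟨F, hF, hmem⟩ := ((hf.eventually_const_lt (sub_lt_self x (sub_pos.2 hi₀))).and
    (eventually_ge_atTop {i₀})).exists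
  have hdiff : g i₀ - f i₀ ≤ ∑ i ∈ F, (g i - f i) :=
    Finset.single_le_sum (f := fun i => g i - f i) (fun i _ => sub_nonneg.2 (hfg i))
      (Finset.singleton_subset_iff.1 hmem)
  rw [Finset.sum_sub_distrib, le_sub_iff_add_le'] at hdiff
  exact ⟨F, (sub_lt_iff_lt_add.1 hF).trans_le hdiff⟩

variable {ι : Type*} {a : ℕ → ℝ} {r : ℝ} {p : ι → ℝ} {s : ι → ℕ}

theorem exists_one_lt_sum_mul_pow (hr : 0 < r) (hp : ∀ i, 0 ≤ p i)
    (hodd : ∃ i, Odd (s i) ∧ 0 < p i) (hsum : HasSum (fun i => p i * r ^ s i) 1)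
    {c : ℝ} (hc : r < c) :
    ∃ F : Finset ι, 1 < ∑ i ∈ F, p i * (c ^ (s i % 2) * (r ^ 2) ^ (s i / 2)) := by
  have hpow (i : ι) : r ^ s i = r ^ (s i % 2) * (r ^ 2) ^ (s i / 2) := by
    rw [← pow_mul, ← pow_add, Nat.mod_add_div]
  obtain ⟨i₀, hs₀, hp₀⟩ := hodd
  refine exists_lt_sum_of_le hsum (i₀ := i₀)
    (fun i => mul_le_mul_of_nonneg_left ?_ (hp i)) (mul_lt_mul_of_pos_left ?_ hp₀)
  · rw [hpow]
    gcongr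
  · rw [hpow, Nat.odd_iff.1 hs₀, pow_one, pow_one]
    gcongr

theorem eventually_sub_one_div_lt (hr : 0 < r) (ha : ∀ᶠ n in atTop, 0 < a n)
    (htwo : Tendsto (fun n => a (n - 2) / a n) atTop (𝓝 (r ^ 2)))
    (hp : ∀ i, 0 ≤ p i) (hodd : ∃ i, Odd (s i) ∧ 0 < p i)
    (hsum : HasSum (fun i => p i * r ^ s i) 1)
    (hle : ∀ F : Finset ι, ∀ᶠ n in atTop, ∑ i ∈ F, p i * a (n - s i) ≤ a n)
    {c : ℝ} (hc : r < c) : ∀ᶠ n in atTop, a (n - 1) / a n < c := by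
  obtain ⟨F, hF⟩ := exists_one_lt_sum_mul_pow hr hp hodd hsum hc
  -- Even steps cost powers of `r ^ 2`, so `τ n i` is `a (n - s i) / a n` with its odd step
  -- `a (n - 1) / a n` replaced by `c`.
  let τ (n : ℕ) (i : ι) : ℝ :=
    c ^ (s i % 2) * (a (n - s i % 2 - 2 * (s i / 2)) / a (n - s i % 2))
  have hτ : Tendsto (fun n => ∑ i ∈ F, p i * τ n i) atTop
      (𝓝 (∑ i ∈ F, p i * (c ^ (s i % 2) * (r ^ 2) ^ (s i / 2)))) :=
    tendsto_finsetSum F fun i _ => (((tendsto_sub_mul_div (ha.mono fun _ h => h.ne') htwo _).comp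
      (tendsto_sub_atTop_nat _)).const_mul _).const_mul _
  have hpos : ∀ᶠ n in atTop, ∀ i ∈ F, 0 < a (n - s i) :=
    (eventually_all_finset F).2 fun i _ => (tendsto_sub_atTop_nat (s i)).eventually ha
  filter_upwards [hτ.eventually_const_lt hF, hle F, hpos, ha,
    (tendsto_sub_atTop_nat 1).eventually ha] with n hn hlen hposn han han1
  by_contra! hcn
  have hτle (i : ι) (hi : i ∈ F) : τ n i ≤ a (n - s i) / a n := by
    have hsub : n - s i % 2 - 2 * (s i / 2) = n - s i := by omega
    simp only [τ, hsub]
    rcases Nat.mod_two_eq_zero_or_one (s i) with he | he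
    · rw [he, pow_zero, one_mul, Nat.sub_zero]
    · rw [he, pow_one, mul_comm]
      exact (mul_le_mul_of_nonneg_left hcn (div_pos (hposn i hi) han1).le).trans_eq
        (div_mul_div_cancel₀ han1.ne')
  refine hn.not_ge ?_
  calc ∑ i ∈ F, p i * τ n i
      ≤ ∑ i ∈ F, p i * (a (n - s i) / a n) :=
        Finset.sum_le_sum fun i hi => mul_le_mul_of_nonneg_left (hτle i hi) (hp i)
    _ = (∑ i ∈ F, p i * a (n - s i)) / a n := by
        rw [Finset.sum_div]
        exact Finset.sum_congr rfl fun i _ => (mul_div_assoc _ _ _).symm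
    _ ≤ 1 := (div_le_one han).2 hlen

theorem tendsto_sub_div_of_sum_mul_le (hr : 0 < r) (ha : ∀ᶠ n in atTop, 0 < a n)
    (htwo : Tendsto (fun n => a (n - 2) / a n) atTop (𝓝 (r ^ 2)))
    (hp : ∀ i, 0 ≤ p i) (hodd : ∃ i, Odd (s i) ∧ 0 < p i)
    (hsum : HasSum (fun i => p i * r ^ s i) 1)
    (hle : ∀ F : Finset ι, ∀ᶠ n in atTop, ∑ i ∈ F, p i * a (n - s i) ≤ a n) (k : ℕ) :
    Tendsto (fun n => a (n - k) / a n) atTop (𝓝 (r ^ k)) := by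
  have ha1 : ∀ᶠ n in atTop, 0 < a (n - 1) := (tendsto_sub_atTop_nat 1).eventually ha
  have hupper (c : ℝ) (hc : r < c) : ∀ᶠ n in atTop, a (n - 1) / a n < c :=
    eventually_sub_one_div_lt hr ha htwo hp hodd hsum hle hc
  have hone : Tendsto (fun n => a (n - 1) / a n) atTop (𝓝 r) := by
    refine tendsto_of_tendsto_mul_of_eventually_lt (v := fun n => a (n - 1 - 1) / a (n - 1)) hr
      ?_ ?_ hupper fun c hc => (tendsto_sub_atTop_nat 1).eventually (hupper c hc)
    · filter_upwards [ha, ha1] with n hn hn1 using div_pos hn1 hn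
    · rw [← sq]
      refine htwo.congr' ?_
      filter_upwards [ha1] with n hn1
      rw [mul_comm, div_mul_div_cancel₀ hn1.ne', Nat.sub_sub]
  simpa only [one_mul] using tendsto_sub_mul_div (ha.mono fun _ hn => hn.ne') hone k

end RatioLimit

theorem pi1_sub {d : ℕ} (x y : Fin d → ℤ) : pi1 (x - y) = pi1 x - pi1 y := by
  unfold pi1
  split <;> simp

section Segments

variable {α : Type*} {k m : ℕ}

/-- The walk formed by the first `k` steps of a `(k + m)`-step walk. -/
def initialSegment (ω : Fin (k + m + 1) → α) : Fin (k + 1) → α :=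
  fun i => ω (Fin.castLE (by omega) i)

/-- The walk formed by the last `m` steps of a `(k + m)`-step walk, translated so as to start
at the origin. -/
def finalSegment [Sub α] (ω : Fin (k + m + 1) → α) : Fin (m + 1) → α :=
  fun j => ω (Fin.natAdd k j) - ω (Fin.natAdd k (0 : Fin (m + 1)))

/-- The decomposition of a `(k + m)`-step walk into its two segments before and after time `k`. -/
def cutAt [Sub α] (k m : ℕ) (ω : Fin (k + m + 1) → α) : (Fin (k + 1) → α) × (Fin (m + 1) → α) :=
  (initialSegment ω, finalSegment ω)

theorem natAdd_eq_finalSegment_add [AddGroup α] (ω : Fin (k + m + 1) → α) (j : Fin (m + 1)) :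
    ω (Fin.natAdd k j) = finalSegment ω j + initialSegment ω (Fin.last k) :=
  (sub_add_cancel _ _).symm

theorem cutAt_injective [AddGroup α] : Function.Injective (cutAt (α := α) k m) := by
  intro ω ω' h
  obtain ⟨hinit, hfinal⟩ := Prod.ext_iff.1 h
  refine funext <| (Fin.forall_fin_add (m := k) (n := m + 1) _).2
    ⟨fun i => congrFun hinit i.castSucc, fun j => ?_⟩
  rw [natAdd_eq_finalSegment_add ω, natAdd_eq_finalSegment_add ω']
  exact congrArg₂ (· + ·) (congrFun hfinal j) (congrFun hinit (Fin.last k))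

theorem mem_range_cutAt [AddGroup α] (η : Fin (k + 1) → α) {ξ : Fin (m + 1) → α} (hξ : ξ 0 = 0) :
    (η, ξ) ∈ Set.range (cutAt k m) := by
  let ω : Fin (k + (m + 1)) → α :=
    Fin.append (fun i => η i.castSucc) (fun j => ξ j + η (Fin.last k))
  have hleft (i : Fin k) : ω (Fin.castAdd (m + 1) i) = η i.castSucc := Fin.append_left _ _ i
  have hright (j : Fin (m + 1)) : ω (Fin.natAdd k j) = ξ j + η (Fin.last k) :=
    Fin.append_right _ _ j
  have hjoin : ω (Fin.natAdd k 0) = η (Fin.last k) := by rw [hright, hξ, zero_add]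
  refine ⟨ω, Prod.ext (funext <| Fin.lastCases hjoin hleft) (funext fun j => ?_)⟩
  exact (congrArg₂ (· - ·) (hright j) hjoin).trans (add_sub_cancel_right _ _)

end Segments

section Walks

variable {d k m : ℕ} {ω : Fin (k + m + 1) → Fin d → ℤ}

theorem IsSAW.initialSegment (hω : IsSAW d (k + m) ω) : IsSAW d k (initialSegment ω) :=
  ⟨fun i => hω.1 (Fin.castAdd m i), hω.2.comp (Fin.castLE_injective _)⟩

theorem IsSAW.finalSegment (hω : IsSAW d (k + m) ω) : IsSAW d m (finalSegment ω) := by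
  refine ⟨fun j => ?_, sub_left_injective.comp <| hω.2.comp (Fin.natAdd_injective _ k)⟩
  simp only [_root_.finalSegment, Pi.sub_apply, sub_sub_sub_cancel_right]
  exact hω.1 (Fin.natAdd k j)

theorem HasRenewalAt.isSAW (hren : HasRenewalAt ω k) (hinit : IsSAW d k (initialSegment ω))
    (hfinal : IsSAW d m (finalSegment ω)) : IsSAW d (k + m) ω := by
  have hdisj (i : Fin k) (j : Fin (m + 1)) :
      ω (Fin.castAdd (m + 1) i) ≠ ω (Fin.natAdd k j) := by
    rcases eq_or_ne j 0 with rfl | hj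
    · exact hinit.2.ne (Fin.castSucc_lt_last i).ne
    · obtain ⟨-, _, h⟩ := hren
      have hij := h (Fin.castAdd (m + 1) i) (Fin.natAdd k j) i.is_lt.le
        (Nat.lt_add_of_pos_right (Fin.pos_iff_ne_zero.2 hj))
      exact fun heq => (hij.1.trans_lt hij.2).ne (congrArg pi1 heq)
  refine ⟨(Fin.forall_fin_add _).2 ⟨hinit.1, fun j => ?_⟩, ?_⟩
  · have hstep := hfinal.1 j
    simp only [finalSegment, Pi.sub_apply, sub_sub_sub_cancel_right] at hstep
    exact hstep
  · rw [← Fin.append_castAdd_natAdd (m := k) (n := m + 1) (f := ω), Fin.append_injective_iff]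
    exact ⟨hinit.2.comp (Fin.castSucc_injective k),
      .of_comp (f := (· - ω (Fin.natAdd k (0 : Fin (m + 1))))) hfinal.2, hdisj⟩

theorem hasRenewalAt_iff_segments (hk : 1 ≤ k) (hm : 1 ≤ m) :
    HasRenewalAt ω k ↔
      (∀ i, pi1 (initialSegment ω i) ≤ pi1 (initialSegment ω (Fin.last k))) ∧
        ∀ j : Fin (m + 1), 1 ≤ j.val → 0 < pi1 (finalSegment ω j) := by
  simp only [finalSegment, pi1_sub, sub_pos]
  constructor
  · rintro ⟨-, _, h⟩
    refine ⟨fun i => (h (Fin.castLE (by omega) i) (Fin.last _) i.is_le ?_).1, fun j hj =>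
      (h 0 (Fin.natAdd k j) (Nat.zero_le k) ?_).2⟩
    · exact Nat.lt_add_of_pos_right hm
    · exact Nat.lt_add_of_pos_right hj
  · rintro ⟨hle, hlt⟩
    refine ⟨hk, by omega, fun a b ha hb => ⟨hle ⟨a, Nat.lt_succ_of_le ha⟩, ?_⟩⟩
    obtain ⟨j, rfl⟩ : ∃ j : Fin (m + 1), Fin.natAdd k j = b :=
      ⟨⟨b - k, by omega⟩, Fin.ext (Nat.add_sub_cancel' hb.le)⟩
    exact hlt j (Nat.pos_of_lt_add_right hb)

theorem mem_Upsilon_and_hasRenewalAt_iff (hk : 1 ≤ k) (hm : 1 ≤ m) :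
    ω ∈ Upsilon d (k + m) ∧ HasRenewalAt ω k ↔
      IsBridge d k (initialSegment ω) ∧ finalSegment ω ∈ Upsilon d m := by
  constructor
  · rintro ⟨⟨hsaw, hzero, hpos⟩, hren⟩
    obtain ⟨hle, hlt⟩ := (hasRenewalAt_iff_segments hk hm).1 hren
    exact ⟨⟨⟨hsaw.initialSegment, hzero, fun i hi => hpos _ hi⟩, hle⟩,
      hsaw.finalSegment, sub_self (ω _), hlt⟩
  · rintro ⟨⟨⟨hinit, hzero, hpos⟩, hle⟩, hfinal, -, hlt⟩
    have hren : HasRenewalAt ω k := (hasRenewalAt_iff_segments hk hm).2 ⟨hle, hlt⟩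
    refine ⟨⟨hren.isSAW hinit hfinal, hzero, fun i hi => ?_⟩, hren⟩
    rcases le_or_gt i.val k with hik | hik
    · exact hpos ⟨i, by omega⟩ hi
    · obtain ⟨-, _, h⟩ := hren
      exact (hpos (Fin.last k) hk).trans (h 0 i (Nat.zero_le k) hik).2

theorem hasRenewalAt_initialSegment_iff (hω : HasRenewalAt ω k) {j : ℕ} (hj : j < k) :
    HasRenewalAt (initialSegment ω) j ↔ HasRenewalAt ω j := by
  obtain ⟨-, hkm, hren⟩ := hω
  constructor
  · rintro ⟨hj1, _, h⟩
    refine ⟨hj1, by omega, fun a b ha hb => ⟨(h ⟨a, by omega⟩ (Fin.last k) ha hj).1, ?_⟩⟩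
    rcases le_or_gt b.val k with hbk | hbk
    · exact (h 0 ⟨b, by omega⟩ (Nat.zero_le j) hb).2
    · exact (h 0 (Fin.last k) (Nat.zero_le j) hj).2.trans (hren 0 b (Nat.zero_le k) hbk).2
  · rintro ⟨hj1, _, h⟩
    exact ⟨hj1, hj, fun a b ha hb => h ⟨a, by omega⟩ ⟨b, by omega⟩ ha hb⟩

theorem leastRenewal_iff :
    LeastRenewal ω k ↔ HasRenewalAt ω k ∧ ∀ j, ¬ HasRenewalAt (initialSegment ω) j := by
  refine and_congr_right fun hω => ⟨fun hmin j hj => ?_, fun hirr j hjk hj => ?_⟩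
  · have hjk : j < k := hj.2.1
    exact hmin j hjk ((hasRenewalAt_initialSegment_iff hω hjk).1 hj)
  · exact hirr j ((hasRenewalAt_initialSegment_iff hω hjk).2 hj)

theorem mem_Upsilon_and_leastRenewal_iff (hk : 1 ≤ k) (hm : 1 ≤ m) :
    ω ∈ Upsilon d (k + m) ∧ LeastRenewal ω k ↔
      IsIrrBridge d k (initialSegment ω) ∧ finalSegment ω ∈ Upsilon d m := by
  rw [leastRenewal_iff, ← and_assoc, mem_Upsilon_and_hasRenewalAt_iff hk hm, and_right_comm]
  rfl

end Walks

theorem ncard_leastRenewal (d : ℕ) {k n : ℕ} (hk : 1 ≤ k) (hn : k < n) :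
    Set.ncard {ω : Fin (n + 1) → Fin d → ℤ | ω ∈ Upsilon d n ∧ LeastRenewal ω k}
      = lambdaCount d k * upsilonCount d (n - k) := by
  obtain ⟨m, rfl⟩ := Nat.exists_eq_add_of_le hn.le
  have hcut : {ω | ω ∈ Upsilon d (k + m) ∧ LeastRenewal ω k} =
      cutAt k m ⁻¹' ({η | IsIrrBridge d k η} ×ˢ Upsilon d m) :=
    Set.ext fun ω => mem_Upsilon_and_leastRenewal_iff hk (by omega)
  rw [hcut, Set.ncard_preimage_of_injective_subset_range cutAt_injective
    fun q hq => mem_range_cutAt q.1 hq.2.2.1, Set.ncard_prod, Nat.add_sub_cancel_left]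
  rfl

theorem IsSAW.abs_sub_apply_le {d n : ℕ} {ω : Fin (n + 1) → Fin d → ℤ} (hω : IsSAW d n ω)
    (c : Fin d) (i : Fin (n + 1)) : |ω i c - ω 0 c| ≤ i := by
  induction i using Fin.induction with
  | zero => simp
  | succ i ih =>
    have hstep : |ω i.succ c - ω i.castSucc c| ≤ 1 :=
      (hω.1 i).symm ▸ Finset.single_le_sum (f := fun c => |ω i.succ c - ω i.castSucc c|)
        (fun _ _ => abs_nonneg _) (Finset.mem_univ c)
    calc |ω i.succ c - ω 0 c|
        ≤ |ω i.succ c - ω i.castSucc c| + |ω i.castSucc c - ω 0 c| := abs_sub_le _ _ _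
      _ ≤ 1 + i := add_le_add hstep ih
      _ = i.succ := by simp [add_comm]

theorem finite_Upsilon (d n : ℕ) : (Upsilon d n).Finite := by
  refine (Set.finite_Icc (fun _ _ => -(n : ℤ)) (fun _ _ => (n : ℤ))).subset ?_
  rintro ω ⟨hsaw, hzero, -⟩
  have hbound (i : Fin (n + 1)) (c : Fin d) : |ω i c| ≤ n := by
    have h := hsaw.abs_sub_apply_le c i
    rw [hzero, Pi.zero_apply, sub_zero] at h
    exact h.trans (by exact_mod_cast i.is_le)
  exact ⟨fun i c => (abs_le.1 (hbound i c)).1, fun i c => (abs_le.1 (hbound i c)).2⟩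

theorem sum_lambdaCount_mul_upsilonCount_le (d : ℕ) {n : ℕ} {F : Finset ℕ}
    (hF : ∀ j ∈ F, j + 1 < n) :
    ∑ j ∈ F, lambdaCount d (j + 1) * upsilonCount d (n - (j + 1)) ≤ upsilonCount d n := by
  let A (j : ℕ) : Set (Fin (n + 1) → Fin d → ℤ) :=
    {ω | ω ∈ Upsilon d n ∧ LeastRenewal ω (j + 1)}
  have hsub (j : ℕ) : A j ⊆ Upsilon d n := fun ω hω => hω.1
  have hdisj : (F : Set ℕ).PairwiseDisjoint A := by
    refine fun i _ j _ hij => Set.disjoint_left.2 fun ω hi hj => ?_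
    rcases lt_or_gt_of_ne hij with h | h
    · exact hj.2.2 _ (by omega) hi.2.1
    · exact hi.2.2 _ (by omega) hj.2.1
  calc ∑ j ∈ F, lambdaCount d (j + 1) * upsilonCount d (n - (j + 1))
      = ∑ j ∈ F, (A j).ncard :=
        Finset.sum_congr rfl fun j hj => (ncard_leastRenewal d (by omega) (hF j hj)).symm
    _ = (⋃ j ∈ (F : Set ℕ), A j).ncard := by
        rw [F.finite_toSet.ncard_biUnion (fun j _ => (finite_Upsilon d n).subset (hsub j)) hdisj,
          finsum_mem_coe_finset]
    _ ≤ upsilonCount d n :=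
        Set.ncard_le_ncard (Set.iUnion₂_subset fun j _ => hsub j) (finite_Upsilon d n)

theorem isIrrBridge_single {d : ℕ} (hd : 0 < d) : IsIrrBridge d 1 ![0, Pi.single ⟨0, hd⟩ 1] := by
  have hpi1_zero : pi1 (0 : Fin d → ℤ) = 0 := by simp [pi1]
  have hpi1_single : pi1 (Pi.single ⟨0, hd⟩ 1 : Fin d → ℤ) = 1 := by simp [pi1, hd]
  refine ⟨⟨⟨⟨?_, ?_⟩, rfl, ?_⟩, ?_⟩, ?_⟩
  · simp [Pi.single_apply, apply_ite abs]
  · simp [Function.Injective, Fin.forall_fin_two, eq_comm]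
  · simp [Fin.forall_fin_two, hpi1_single]
  · simp [Fin.forall_fin_two, hpi1_zero, hpi1_single, Fin.last]
  · rintro j ⟨hj, hj', -⟩
    omega

theorem lambdaCount_one_pos {d : ℕ} (hd : 0 < d) : 0 < lambdaCount d 1 :=
  (Set.ncard_pos ((finite_Upsilon d 1).subset fun _ hω => hω.1.1)).2 ⟨_, isIrrBridge_single hd⟩

section KestenRatio

open Filter Topology

theorem tendsto_upsilonCount_sub_div {d : ℕ} (hd : 0 < d) {β : ℝ} (hβ : 0 < β)
    (hsum : ∑' j : ℕ, (lambdaCount d (j + 1) : ℝ) / β ^ (j + 1) = 1)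
    (htwo : Tendsto (fun n : ℕ => (upsilonCount d (n + 2) : ℝ) / upsilonCount d n) atTop
      (𝓝 (β ^ 2)))
    (k : ℕ) :
    Tendsto (fun n : ℕ => (upsilonCount d (n - k) : ℝ) / upsilonCount d n) atTop
      (𝓝 (β⁻¹ ^ k)) := by
  have hpos : ∀ᶠ n in atTop, (0 : ℝ) < upsilonCount d n := by
    filter_upwards [htwo.eventually_const_lt (pow_pos hβ 2)] with n hn
    exact (Nat.cast_nonneg _).lt_of_ne' fun h => by simp [h] at hn
  refine tendsto_sub_div_of_sum_mul_le (p := fun j : ℕ => (lambdaCount d (j + 1) : ℝ))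
    (s := fun j => j + 1) (inv_pos.2 hβ) hpos ?_ (fun j => Nat.cast_nonneg _)
    ⟨0, odd_one, Nat.cast_pos.2 (lambdaCount_one_pos hd)⟩ ?_ (fun F => ?_) k
  · rw [← tendsto_add_atTop_iff_nat 2]
    simpa only [inv_div, inv_pow, Nat.add_sub_cancel] using htwo.inv₀ (pow_pos hβ 2).ne'
  · simp only [inv_pow, ← div_eq_mul_inv]
    have hsummable : Summable fun j : ℕ => (lambdaCount d (j + 1) : ℝ) / β ^ (j + 1) := by
      by_contra h
      exact zero_ne_one ((tsum_eq_zero_of_not_summable h).symm.trans hsum)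
    exact hsum ▸ hsummable.hasSum
  · filter_upwards [(eventually_all_finset F).2 fun j _ => eventually_gt_atTop (j + 1)] with n hn
    exact_mod_cast sum_lambdaCount_mul_upsilonCount_le d hn

end KestenRatio

/-- Kesten's relations imply that, under the uniform measure on `Υ_n`, the
probability that the least renewal time equals `k` converges to `λ_k β^{−k}`:
for every `k ≥ 1`, `#{ω ∈ Υ_n : s(ω) = k}/υ_n → λ_k β^{−k}` as `n → ∞`. -/
theorem tendsto_leastRenewal_prob (d : ℕ) (hd : 2 ≤ d) (β : ℝ) (hβ : 1 < β)
    (h1 : ∑' j : ℕ, (lambdaCount d (j + 1) : ℝ) / β ^ (j + 1) = 1)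
    (h2 : Filter.Tendsto (fun n : ℕ => (upsilonCount d (n + 2) : ℝ) / (upsilonCount d n : ℝ))
      Filter.atTop (nhds (β ^ 2)))
    (k : ℕ) (hk : 1 ≤ k) :
    Filter.Tendsto
      (fun n : ℕ =>
        (Set.ncard {ω : Fin (n + 1) → Fin d → ℤ | ω ∈ Upsilon d n ∧ LeastRenewal ω k} : ℝ)
          / (upsilonCount d n : ℝ))
      Filter.atTop (nhds ((lambdaCount d k : ℝ) / β ^ k)) := by
  have hratio := tendsto_upsilonCount_sub_div (by omega : 0 < d) (by linarith : 0 < β) h1 h2 k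
  rw [div_eq_mul_inv, ← inv_pow]
  refine (hratio.const_mul (lambdaCount d k : ℝ)).congr' ?_
  filter_upwards [Filter.eventually_gt_atTop k] with n hn
  rw [ncard_leastRenewal d hk hn, Nat.cast_mul, mul_div_assoc]
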